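/- Let (X,d) be a compact metric space, f: X → X a continuous map, and K ⊆ M_f(X) a nonempty compact connected subset. Then for every ε > 0, h_top^B(G_K,f,ε) ≤ inf_{μ∈K} inf_{ξ: diam ξ < ε} h_μ(f,ξ), where the inner infimum is over all finite measurable partitions ξ of X with diam ξ < ε. -/

import Mathlib

open MeasureTheory Filter Set Topology
open scoped ENNReal NNReal

noncomputable section

namespace MMD

variable {X : Type*}

/-! ### Bowen balls, Bowen topological entropy and metric mean dimension -/

/-- The Bowen ball `B_n(x,ε) = {y | d_n(x,y) < ε}` where `d_n` is the Bowen metric. -/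
def bowenBall [PseudoMetricSpace X] (f : X → X) (x : X) (n : ℕ) (ε : ℝ) : Set X :=
  {y | ∀ i < n, dist (f^[i] x) (f^[i] y) < ε}

/-- The weight sum `Σ_{(x,n) ∈ C} exp (-s n)` of a (countable) collection of Bowen balls,
encoded by its set of centers/lengths. -/
def coverSum (s : ℝ) (C : Set (X × ℕ)) : ℝ≥0∞ :=
  ∑' p : C, ENNReal.ofReal (Real.exp (-s * ((p : X × ℕ).2 : ℝ)))

/-- `m(Z,s,N,ε,f)`: infimum over countable (or finite) covers of `Z` by Bowen balls
`B_{n_i}(x_i,ε)` with `n_i ≥ N` of `Σ exp (-s n_i)`. -/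
def mB [PseudoMetricSpace X] (f : X → X) (Z : Set X) (s : ℝ) (N : ℕ) (ε : ℝ) : ℝ≥0∞ :=
  ⨅ (C : Set (X × ℕ)) (_ : C.Countable) (_ : ∀ p ∈ C, N ≤ p.2)
    (_ : Z ⊆ ⋃ p ∈ C, bowenBall f p.1 p.2 ε), coverSum s C

/-- `m(Z,s,ε) = lim_{N→∞} m(Z,s,N,ε,f)`; the limit of this monotone quantity is the sup. -/
def mBLim [PseudoMetricSpace X] (f : X → X) (Z : Set X) (s : ℝ) (ε : ℝ) : ℝ≥0∞ :=
  ⨆ N : ℕ, mB f Z s N ε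

/-- The Bowen topological entropy of `Z` at scale `ε`:
`h_top^B(Z,f,ε) = inf {s | m(Z,s,ε) = 0}`. -/
def hB [PseudoMetricSpace X] (f : X → X) (Z : Set X) (ε : ℝ) : ℝ :=
  sInf {s : ℝ | mBLim f Z s ε = 0}

/-- Upper Bowen metric mean dimension of `Z`. -/
def mdimUpper [PseudoMetricSpace X] (f : X → X) (Z : Set X) : ℝ :=
  limsup (fun ε : ℝ => hB f Z ε / |Real.log ε|) (𝓝[>] (0:ℝ))

/-- Lower Bowen metric mean dimension of `Z`. -/
def mdimLower [PseudoMetricSpace X] (f : X → X) (Z : Set X) : ℝ :=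
  liminf (fun ε : ℝ => hB f Z ε / |Real.log ε|) (𝓝[>] (0:ℝ))

/-! ### Finite measurable partitions and measure-theoretic entropy -/

/-- `P` is a finite measurable partition of `X` (mod `μ`): its elements are measurable,
they cover `X` up to a `μ`-null set, and they pairwise intersect in `μ`-null sets. -/
def IsPartition [MeasurableSpace X] (μ : Measure X) (P : Finset (Set X)) : Prop :=
  (∀ A ∈ P, MeasurableSet A) ∧ μ (Set.univ \ ⋃ A ∈ P, A) = 0 ∧
    ∀ A ∈ P, ∀ B ∈ P, A ≠ B → μ (A ∩ B) = 0

/-- Static entropy `H_μ(P) = -Σ_{A∈P} μ(A) log μ(A)`. -/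
def partEnt [MeasurableSpace X] (μ : Measure X) (P : Finset (Set X)) : ℝ :=
  ∑ A ∈ P, Real.negMulLog ((μ A).toReal)

/-- Join (common refinement) of two finite families of sets. -/
def joinParts (P Q : Finset (Set X)) : Finset (Set X) :=
  letI := Classical.decEq (Set X)
  (P ×ˢ Q).image fun p => p.1 ∩ p.2

/-- `dynJoin f P n = ⋁_{j=0}^{n-1} f^{-j} P`. -/
def dynJoin (f : X → X) (P : Finset (Set X)) : ℕ → Finset (Set X)
  | 0 => {Set.univ}
  | n + 1 =>
      letI := Classical.decEq (Set X)
      joinParts P ((dynJoin f P n).image fun A => f ⁻¹' A)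

/-- Measure-theoretic entropy of `f` w.r.t. the partition `P`:
`h_μ(f,P) = lim_n (1/n) H_μ(⋁_{j<n} f^{-j}P)` (the limit exists, hence equals the `limsup`). -/
def dynEnt [MeasurableSpace X] (μ : Measure X) (f : X → X) (P : Finset (Set X)) : ℝ :=
  limsup (fun n : ℕ => partEnt μ (dynJoin f P n) / n) atTop

/-- `diam P < ε`, i.e. every element of `P` has diameter `< ε`. -/
def partDiamLt [PseudoMetricSpace X] (P : Finset (Set X)) (ε : ℝ) : Prop :=
  ∀ A ∈ P, Metric.diam A < ε

/-- `inf_{ξ : diam ξ < ε} h_μ(f,ξ)`, the infimum over all finite measurable partitions of `X`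
with diameter `< ε`. -/
def infEnt [PseudoMetricSpace X] [MeasurableSpace X] (μ : Measure X) (f : X → X) (ε : ℝ) : ℝ :=
  sInf (dynEnt μ f '' {P : Finset (Set X) | IsPartition μ P ∧ partDiamLt P ε})

/-! ### Empirical measures, generic points and saturated sets -/

/-- The `n`-th empirical measure `E_n(x) = (1/n) Σ_{j<n} δ_{f^j x}` (defined as `E_1(x)`
for `n = 0`, a junk value). -/
def empMeasure [MeasurableSpace X] (f : X → X) (x : X) (n : ℕ) : Measure X :=
  ((max n 1 : ℕ) : ℝ≥0∞)⁻¹ • ∑ j ∈ Finset.range (max n 1), Measure.dirac (f^[j] x)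

instance [MeasurableSpace X] (f : X → X) (x : X) (n : ℕ) :
    IsProbabilityMeasure (empMeasure f x n) := by
  constructor
  have h1 : (0:ℕ) < max n 1 := lt_of_lt_of_le one_pos (le_max_right n 1)
  have hsum : (∑ j ∈ Finset.range (max n 1), Measure.dirac (f^[j] x)) Set.univ
      = ((max n 1 : ℕ) : ℝ≥0∞) := by
    rw [Measure.finset_sum_apply]
    simp
  simp only [empMeasure, Measure.smul_apply, smul_eq_mul, hsum]
  exact ENNReal.inv_mul_cancel (by exact_mod_cast h1.ne') (by simp)

/-- The `n`-th empirical measure as a probability measure. -/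
def empProb [MeasurableSpace X] (f : X → X) (x : X) (n : ℕ) : ProbabilityMeasure X :=
  ⟨empMeasure f x n, inferInstance⟩

/-- `V_f(x)`: the set of weak* limit points of the sequence of empirical measures of `x`. -/
def Vf [MetricSpace X] [MeasurableSpace X] [BorelSpace X] (f : X → X) (x : X) :
    Set (ProbabilityMeasure X) :=
  {ν | MapClusterPt ν atTop (empProb f x)}

/-- The saturated set `G_K = {x | V_f(x) = K}`. -/
def GK [MetricSpace X] [MeasurableSpace X] [BorelSpace X] (f : X → X)
    (K : Set (ProbabilityMeasure X)) : Set X :=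
  {x | Vf f x = K}

/-- The generic set `G_μ = {x | V_f(x) = {μ}}`. -/
def genSet [MetricSpace X] [MeasurableSpace X] [BorelSpace X] (f : X → X)
    (μ : ProbabilityMeasure X) : Set X :=
  GK f {μ}

/-! ### Invariant measures, supports, measure center, omega-limit sets -/

/-- `μ` is an `f`-invariant (Borel probability) measure. -/
def InvariantProb [MeasurableSpace X] (f : X → X) (μ : ProbabilityMeasure X) : Prop :=
  Measure.map f (μ : Measure X) = (μ : Measure X)

/-- The set `M_f(X)` of invariant probability measures. -/
def invSet [MeasurableSpace X] (f : X → X) : Set (ProbabilityMeasure X) :=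
  {μ | InvariantProb f μ}

/-- The support of a measure: points all of whose neighborhoods have positive measure. -/
def measSupport [TopologicalSpace X] [MeasurableSpace X] (μ : Measure X) : Set X :=
  {x | ∀ U ∈ 𝓝 x, 0 < μ U}

/-- The measure center `C_f(X) = closure (⋃_{μ ∈ M_f(X)} S_μ)`. -/
def measCenter [TopologicalSpace X] [MeasurableSpace X] (f : X → X) : Set X :=
  closure (⋃ μ ∈ invSet f, measSupport (μ : Measure X))

/-- The omega-limit set `ω_f(x) = ⋂_n closure {f^k x : k ≥ n}`. -/
def omegaSet [TopologicalSpace X] (f : X → X) (x : X) : Set X :=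
  ⋂ n : ℕ, closure {y | ∃ k, n ≤ k ∧ f^[k] x = y}

/-- The set of points whose omega-limit set contains the measure center. -/
def CtrSet [TopologicalSpace X] [MeasurableSpace X] (f : X → X) : Set X :=
  {x | measCenter f ⊆ omegaSet f x}

/-! ### Blow-up functions and the g-almost product property -/

/-- A blowup function: nondecreasing, unbounded, `g n < n` and `g n / n → 0`. -/
structure IsBlowup (g : ℕ → ℕ) : Prop where
  mono : Monotone g
  unbounded : ∀ C : ℕ, ∃ n, C < g n
  lt_self : ∀ n, 0 < n → g n < n
  ratio_tendsto_zero : Tendsto (fun n : ℕ => (g n : ℝ) / n) atTop (𝓝 0)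

/-- The g-blowup `B_n(g;x,ε)` of the Bowen ball `B_n(x,ε)`. -/
def blowupBall [PseudoMetricSpace X] (f : X → X) (g : ℕ → ℕ) (x : X) (n : ℕ) (ε : ℝ) :
    Set X :=
  {y | ∃ Λ : Finset ℕ, Λ ⊆ Finset.range n ∧
    letI := Classical.decEq ℕ
    (Finset.range n \ Λ).card ≤ g n ∧ ∀ j ∈ Λ, dist (f^[j] x) (f^[j] y) ≤ ε}

/-- The g-almost product property. -/
def GAlmostProduct [PseudoMetricSpace X] (f : X → X) (g : ℕ → ℕ) : Prop :=
  ∃ m : ℝ → ℕ, (∀ s t : ℝ, 0 < s → s ≤ t → m t ≤ m s) ∧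
    ∀ (k : ℕ) (x : ℕ → X) (ε : ℕ → ℝ) (n : ℕ → ℕ),
      (∀ j < k, 0 < ε j) → (∀ j < k, m (ε j) ≤ n j) →
      (⋂ j ∈ Finset.range k,
        (f^[∑ i ∈ Finset.range j, n i] ⁻¹' blowupBall f g (x j) (n j) (ε j))).Nonempty

/-! ### Separated sets and Pfister–Sullivan quantities -/

/-- The number of times `0 ≤ j < n` at which the orbits of `x` and `y` are `ε`-apart. -/
def sepCount [PseudoMetricSpace X] (f : X → X) (x y : X) (n : ℕ) (ε : ℝ) : ℕ :=
  letI := Classical.decPred fun j : ℕ => ε < dist (f^[j] x) (f^[j] y)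
  ((Finset.range n).filter fun j => ε < dist (f^[j] x) (f^[j] y)).card

/-- `N(F; δ, n, ε)`: maximal cardinality of a `(δ,n,ε)`-separated subset of
`X_{n,F} = {x | E_n(x) ∈ F}`. -/
def NsepD [MetricSpace X] [MeasurableSpace X] [BorelSpace X] (f : X → X)
    (F : Set (ProbabilityMeasure X)) (δ : ℝ) (n : ℕ) (ε : ℝ) : ℕ :=
  sSup {c : ℕ | ∃ E : Finset X, (↑E : Set X) ⊆ {x | empProb f x n ∈ F} ∧
    (∀ x ∈ E, ∀ y ∈ E, x ≠ y → δ * n ≤ (sepCount f x y n ε : ℝ)) ∧ E.card = c}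

/-- `N(F; n, ε)`: maximal cardinality of an `(n,ε)`-separated subset of `X_{n,F}`. -/
def NsepP [MetricSpace X] [MeasurableSpace X] [BorelSpace X] (f : X → X)
    (F : Set (ProbabilityMeasure X)) (n : ℕ) (ε : ℝ) : ℕ :=
  sSup {c : ℕ | ∃ E : Finset X, (↑E : Set X) ⊆ {x | empProb f x n ∈ F} ∧
    (∀ x ∈ E, ∀ y ∈ E, x ≠ y → ∃ i < n, ε < dist (f^[i] x) (f^[i] y)) ∧ E.card = c}

/-- `PS-bar(μ,δ,ε) = inf_{F ∋ μ} limsup_n (1/n) ln N(F;δ,n,ε)`. -/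
def PSbar [MetricSpace X] [MeasurableSpace X] [BorelSpace X] (f : X → X)
    (μ : ProbabilityMeasure X) (δ ε : ℝ) : ℝ :=
  sInf ((fun F => limsup (fun n : ℕ => Real.log (NsepD f F δ n ε) / n) atTop) ''
    {F : Set (ProbabilityMeasure X) | F ∈ 𝓝 μ})

/-! ### Convex combinations of probability measures -/

/-- The convex hull `cov{μ_1,…,μ_m}` of finitely many probability measures. -/
def convexCombos [MeasurableSpace X] {m : ℕ} (μ : Fin m → ProbabilityMeasure X) :
    Set (ProbabilityMeasure X) :=
  {ν | ∃ t : Fin m → ℝ≥0∞, (∑ i, t i) = 1 ∧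
    (ν : Measure X) = ∑ i, t i • (μ i : Measure X)}

/-- The convex combination `θ μ + (1-θ) ν` of two probability measures (with `θ`
clamped into `[0,1]`). -/
def mixP [MeasurableSpace X] (μ ν : ProbabilityMeasure X) (θ : ℝ) : ProbabilityMeasure X :=
  ⟨ENNReal.ofReal (min (max θ 0) 1) • (μ : Measure X)
      + ENNReal.ofReal (1 - min (max θ 0) 1) • (ν : Measure X), by
    constructor
    set t := min (max θ 0) 1 with ht
    have h0 : 0 ≤ t := le_min (le_max_right θ 0) zero_le_one
    have h1 : t ≤ 1 := min_le_right _ _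
    rw [Measure.add_apply, Measure.smul_apply, Measure.smul_apply, measure_univ, measure_univ,
      smul_eq_mul, smul_eq_mul, mul_one, mul_one, ← ENNReal.ofReal_add h0 (by linarith)]
    have : t + (1 - t) = 1 := by ring
    rw [this, ENNReal.ofReal_one]⟩

/-- Condition A.3: for invariant `μ, ν` with `α μ ≠ α ν`, the map
`θ ↦ α(θμ + (1-θ)ν)` is not constant on any nondegenerate subinterval of `[0,1]`. -/
def CondA3 [MeasurableSpace X] (f : X → X) (α : ProbabilityMeasure X → ℝ) : Prop :=
  ∀ μ ∈ invSet f, ∀ ν ∈ invSet f, α μ ≠ α ν →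
    ∀ a b : ℝ, 0 ≤ a → a < b → b ≤ 1 →
      ¬ (∀ s ∈ Set.Icc a b, ∀ t ∈ Set.Icc a b, α (mixP μ ν s) = α (mixP μ ν t))

end MMD

end

open MMD MeasureTheory Filter Set Topology
open scoped ENNReal NNReal

noncomputable section

lemma mem_joinParts {X : Type*} {P Q : Finset (Set X)} {C : Set X} :
    C ∈ joinParts P Q ↔ ∃ A ∈ P, ∃ B ∈ Q, A ∩ B = C := by
  classical
  simp only [joinParts, Finset.mem_image, Finset.mem_product, Prod.exists]
  constructor
  · rintro ⟨A, B, ⟨hA, hB⟩, h⟩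
    exact ⟨A, hA, B, hB, h⟩
  · rintro ⟨A, hA, B, hB, h⟩
    exact ⟨A, B, ⟨hA, hB⟩, h⟩

lemma mem_dynJoin_succ {X : Type*} {f : X → X} {P : Finset (Set X)} {n : ℕ} {C : Set X} :
    C ∈ dynJoin f P (n + 1) ↔ ∃ A ∈ P, ∃ B ∈ dynJoin f P n, A ∩ f ⁻¹' B = C := by
  classical
  simp only [dynJoin, mem_joinParts, Finset.mem_image]
  constructor
  · rintro ⟨A, hA, B, ⟨B', hB', rfl⟩, h⟩
    exact ⟨A, hA, B', hB', h⟩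
  · rintro ⟨A, hA, B, hB, h⟩
    exact ⟨A, hA, _, ⟨B, hB, rfl⟩, h⟩

lemma card_dynJoin {X : Type*} (f : X → X) (P : Finset (Set X)) (n : ℕ) :
    (dynJoin f P n).card ≤ P.card ^ n := by
  classical
  induction n with
  | zero => simp [dynJoin]
  | succ n ih =>
    simp only [dynJoin, joinParts]
    refine Finset.card_image_le.trans ?_
    rw [Finset.card_product, pow_succ, mul_comm]
    exact Nat.mul_le_mul_right _ (Finset.card_image_le.trans ih)

lemma isPartition_dynJoin {X : Type*} [MeasurableSpace X] {μ : Measure X}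
    [IsProbabilityMeasure μ] {f : X → X} (hf : MeasurePreserving f μ μ)
    {P : Finset (Set X)} (hP : IsPartition μ P) (n : ℕ) : IsPartition μ (dynJoin f P n) := by
  induction n with
  | zero =>
    refine ⟨?_, ?_, ?_⟩ <;> simp [dynJoin]
  | succ n ih =>
    obtain ⟨h1, h2, h3⟩ := hP
    obtain ⟨i1, i2, i3⟩ := ih
    refine ⟨?_, ?_, ?_⟩
    · intro C hC
      obtain ⟨A, hA, B, hB, rfl⟩ := mem_dynJoin_succ.1 hC
      exact (h1 A hA).inter (hf.measurable (i1 B hB))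
    · have hmeas : MeasurableSet (Set.univ \ ⋃ A ∈ dynJoin f P n, A) :=
        MeasurableSet.univ.diff (Finset.measurableSet_biUnion _ i1)
      have i2' : μ (f ⁻¹' (Set.univ \ ⋃ A ∈ dynJoin f P n, A)) = 0 := by
        rw [hf.measure_preimage hmeas.nullMeasurableSet]; exact i2
      refine measure_mono_null ?_ (measure_union_null h2 i2')
      intro x hx
      by_contra hcon
      simp only [mem_union, Set.mem_sdiff, mem_univ, true_and, mem_iUnion, mem_preimage,
        not_or, not_not] at hcon hx
      obtain ⟨⟨A, hA, hxA⟩, ⟨B, hB, hxB⟩⟩ := hcon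
      exact hx ⟨A ∩ f ⁻¹' B, mem_dynJoin_succ.2 ⟨A, hA, B, hB, rfl⟩, hxA, hxB⟩
    · intro C hC C' hC' hne
      obtain ⟨A, hA, B, hB, rfl⟩ := mem_dynJoin_succ.1 hC
      obtain ⟨A', hA', B', hB', rfl⟩ := mem_dynJoin_succ.1 hC'
      by_cases hAA : A = A'
      · have hBB : B ≠ B' := by
          rintro rfl
          exact hne (by rw [hAA])
        have : μ (f ⁻¹' (B ∩ B')) = 0 := by
          rw [hf.measure_preimage ((i1 B hB).inter (i1 B' hB')).nullMeasurableSet]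
          exact i3 B hB B' hB' hBB
        refine measure_mono_null ?_ this
        intro x hx
        exact ⟨hx.1.2, hx.2.2⟩
      · refine measure_mono_null ?_ (h3 A hA A' hA' hAA)
        intro x hx
        exact ⟨hx.1.1, hx.2.1⟩

lemma dist_dynJoin {X : Type*} [MetricSpace X] [CompactSpace X] {f : X → X}
    {P : Finset (Set X)} {ε : ℝ} (hP : partDiamLt P ε) (n : ℕ) :
    ∀ C ∈ dynJoin f P n, ∀ y ∈ C, ∀ z ∈ C, ∀ i < n, dist (f^[i] y) (f^[i] z) < ε := by
  induction n with
  | zero => intro C _ y _ z _ i hi; omega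
  | succ n ih =>
    intro C hC y hy z hz i hi
    obtain ⟨A, hA, B, hB, rfl⟩ := mem_dynJoin_succ.1 hC
    cases i with
    | zero =>
      exact (Metric.dist_le_diam_of_mem (Metric.isBounded_of_compactSpace) hy.1 hz.1).trans_lt
        (hP A hA)
    | succ i =>
      simpa using ih B hB (f y) hy.2 (f z) hz.2 i (by omega)

lemma sum_partition {X : Type*} [MeasurableSpace X] {μ : Measure X}
    [IsProbabilityMeasure μ] {P : Finset (Set X)} (hP : IsPartition μ P) :
    ∑ A ∈ P, (μ A).toReal = 1 := by
  obtain ⟨h1, h2, h3⟩ := hP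
  have hU : μ (⋃ A ∈ P, A) = 1 := by
    rw [← Set.compl_eq_univ_sdiff] at h2
    exact (prob_compl_eq_zero_iff (Finset.measurableSet_biUnion _ h1)).1 h2
  rw [measure_biUnion_finset₀ (f := fun A : Set X => A)] at hU
  · rw [← ENNReal.toReal_sum (fun A _ => measure_ne_top _ _), hU, ENNReal.toReal_one]
  · intro A hA B hB hne
    exact h3 A hA B hB hne
  · intro A hA
    exact (h1 A hA).nullMeasurableSet

lemma partEnt_nonneg {X : Type*} [MeasurableSpace X] (μ : Measure X)
    [IsProbabilityMeasure μ] (P : Finset (Set X)) : 0 ≤ partEnt μ P := by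
  refine Finset.sum_nonneg fun A _ => Real.negMulLog_nonneg ENNReal.toReal_nonneg ?_
  exact ENNReal.toReal_le_of_le_ofReal zero_le_one (by simpa using prob_le_one)

lemma partEnt_le_log_card {X : Type*} [MeasurableSpace X] {μ : Measure X}
    [IsProbabilityMeasure μ] {P : Finset (Set X)} (hP : IsPartition μ P) :
    partEnt μ P ≤ Real.log P.card := by
  have hs := sum_partition hP
  have hne : P.Nonempty := by
    rw [Finset.nonempty_iff_ne_empty]
    rintro rfl
    simp at hs
  have hc : (0:ℝ) < P.card := by exact_mod_cast hne.card_pos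
  have hJ := Real.concaveOn_negMulLog.le_map_sum (t := P) (w := fun _ => (P.card : ℝ)⁻¹)
    (p := fun A => (μ A).toReal) (fun _ _ => by positivity)
    (by simp [hc.ne']) (fun A _ => by simp)
  simp only [smul_eq_mul, ← Finset.mul_sum, hs, mul_one] at hJ
  rw [Real.negMulLog, Real.log_inv] at hJ
  have : (P.card : ℝ)⁻¹ * partEnt μ P ≤ (P.card : ℝ)⁻¹ * Real.log P.card := by
    simpa [partEnt] using hJ
  exact le_of_mul_le_mul_left this (by positivity)

lemma exists_good_m {X : Type*} [MeasurableSpace X] {μ : Measure X}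
    [IsProbabilityMeasure μ] {f : X → X} (hf : MeasurePreserving f μ μ)
    {P : Finset (Set X)} (hP : IsPartition μ P) {s : ℝ} (hs : dynEnt μ f P < s) :
    ∃ m : ℕ, 0 < m ∧ partEnt μ (dynJoin f P m) < m * s := by
  have hb : IsBoundedUnder (· ≤ ·) atTop
      (fun n : ℕ => partEnt μ (dynJoin f P n) / n) := by
    refine ⟨Real.log P.card, ?_⟩
    rw [eventually_map]
    filter_upwards [eventually_gt_atTop 0] with n hn
    have hn' : (0:ℝ) < n := by exact_mod_cast hn
    rw [div_le_iff₀ hn']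
    have hpart := isPartition_dynJoin hf hP n
    refine (partEnt_le_log_card hpart).trans ?_
    have hne : (dynJoin f P n).Nonempty := by
      rw [Finset.nonempty_iff_ne_empty]
      intro h
      have := sum_partition hpart
      rw [h] at this
      simp at this
    have h0 : (0:ℝ) < (dynJoin f P n).card := by exact_mod_cast hne.card_pos
    have h1 : ((dynJoin f P n).card : ℝ) ≤ (P.card : ℝ) ^ n := by
      exact_mod_cast card_dynJoin f P n
    calc Real.log (dynJoin f P n).card ≤ Real.log ((P.card : ℝ) ^ n) := Real.log_le_log h0 h1
      _ = Real.log P.card * n := by rw [Real.log_pow]; ring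
  have := eventually_lt_of_limsup_lt hs hb
  obtain ⟨m, hm, hm0⟩ := (this.and (eventually_gt_atTop 0)).exists
  refine ⟨m, hm0, ?_⟩
  have hm' : (0:ℝ) < m := by exact_mod_cast hm0
  rw [div_lt_iff₀ hm'] at hm
  linarith

lemma exists_partition {X : Type*} [MetricSpace X] [CompactSpace X] [Nonempty X]
    [MeasurableSpace X] [BorelSpace X] (μ : Measure X) {ε : ℝ} (hε : 0 < ε) :
    ∃ P : Finset (Set X), IsPartition μ P ∧ partDiamLt P ε := by
  classical
  let B : ℕ → Set X := fun i => Metric.ball (TopologicalSpace.denseSeq X i) (ε / 3)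
  have hcov : (Set.univ : Set X) ⊆ ⋃ i, B i := by
    intro x _
    obtain ⟨i, hy⟩ := (TopologicalSpace.denseRange_denseSeq X).exists_dist_lt x
      (show 0 < ε / 3 by positivity)
    exact mem_iUnion.2 ⟨i, hy⟩
  obtain ⟨t, ht⟩ := isCompact_univ.elim_finite_subcover B (fun i => Metric.isOpen_ball) hcov
  obtain ⟨n, hn⟩ := t.exists_nat_subset_range
  refine ⟨(Finset.range n).image (disjointed B), ⟨?_, ?_, ?_⟩, ?_⟩
  · intro A hA
    obtain ⟨i, hi, rfl⟩ := Finset.mem_image.1 hA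
    exact MeasurableSet.disjointed (fun i => Metric.isOpen_ball.measurableSet) i
  · convert measure_empty (μ := μ)
    rw [Set.sdiff_eq_empty]
    intro x hx
    have h : ∃ i, x ∈ B i := by simpa using hcov hx
    have hfi := Nat.find_spec h
    refine mem_iUnion₂.2 ⟨disjointed B (Nat.find h), Finset.mem_image.2 ⟨_, ?_, rfl⟩, ?_⟩
    · obtain ⟨i, hi, hxi⟩ := mem_iUnion₂.1 (ht hx)
      have := Nat.find_min' h hxi
      have := Finset.mem_range.1 (hn hi)
      exact Finset.mem_range.2 (by omega)
    · rw [disjointed_eq_inter_compl]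
      refine ⟨hfi, mem_iInter₂.2 fun j hj => Nat.find_min h hj⟩
  · intro A hA C hC hne
    obtain ⟨i, hi, rfl⟩ := Finset.mem_image.1 hA
    obtain ⟨j, hj, rfl⟩ := Finset.mem_image.1 hC
    have hij : i ≠ j := fun h => hne (by rw [h])
    rw [(disjoint_disjointed B hij).inter_eq]
    exact measure_empty
  · intro A hA
    obtain ⟨i, hi, rfl⟩ := Finset.mem_image.1 hA
    calc Metric.diam (disjointed B i) ≤ Metric.diam (B i) :=
          Metric.diam_mono (disjointed_subset B i) Metric.isBounded_ball
      _ ≤ 2 * (ε / 3) := Metric.diam_ball (by positivity)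
      _ < ε := by linarith

lemma exists_coding.{u} {X : Type u} [MetricSpace X] [CompactSpace X]
    [MeasurableSpace X] [BorelSpace X] (μ : Measure X) [IsProbabilityMeasure μ]
    {Q : Finset (Set X)} (hQ : IsPartition μ Q) {O : Set (X × X)} (hO : IsOpen O)
    (hdiag : ∀ x, (x, x) ∈ O) (hQO : ∀ C ∈ Q, C ×ˢ C ⊆ O) {a : ℝ} (ha : partEnt μ Q < a) :
    ∃ (κ : Type u) (_ : Fintype κ) (D : κ → Set X) (p : κ → ℝ) (G : C(X, ℝ)),
      (∀ i, 0 < p i) ∧ (∑ i, p i ≤ 1) ∧ (∀ i, D i ×ˢ D i ⊆ O) ∧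
      (∀ x, ∃ i, x ∈ D i ∧ - Real.log (p i) ≤ G x) ∧ (∀ x, 0 ≤ G x) ∧ ∫ x, G x ∂μ < a := by
  classical
  -- a finite cover of the whole space
  have hW : ∀ x : X, ∃ W : Set X, IsOpen W ∧ x ∈ W ∧ W ×ˢ W ⊆ O := by
    intro x
    obtain ⟨u, v, hu, hv, hxu, hxv, huv⟩ := generalized_tube_lemma
      (isCompact_singleton (x := x)) (isCompact_singleton (x := x)) hO
      (by rintro ⟨y, z⟩ ⟨hy, hz⟩; obtain rfl : y = x := hy; obtain rfl : z = y := hz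
          exact hdiag _)
    exact ⟨u ∩ v, hu.inter hv, ⟨hxu rfl, hxv rfl⟩,
      fun q hq => huv ⟨hq.1.1, hq.2.2⟩⟩
  choose W hWo hWx hWO using hW
  obtain ⟨t, ht⟩ := isCompact_univ.elim_finite_subcover W hWo
    (fun x _ => mem_iUnion.2 ⟨x, hWx x⟩)
  have hne : Nonempty X := by
    by_contra h
    rw [not_nonempty_iff] at h
    have := measure_univ (μ := μ)
    simp [Set.eq_empty_of_isEmpty] at this
  have htne : t.Nonempty := by
    obtain ⟨x⟩ := hne
    obtain ⟨i, hi, _⟩ := mem_iUnion₂.1 (ht (mem_univ x))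
    exact ⟨i, hi⟩
  have htc : (0:ℝ) < t.card := by exact_mod_cast htne.card_pos
  -- atoms of positive measure
  set Q' : Finset (Set X) := Q.filter fun C => 0 < (μ C).toReal with hQ'
  have hQ'pos : ∀ C : Q', 0 < (μ (C : Set X)).toReal := fun C => (Finset.mem_filter.1 C.2).2
  have hQ'Q : ∀ C : Q', (C : Set X) ∈ Q := fun C => (Finset.mem_filter.1 C.2).1
  have hzero : ∀ C ∈ Q, C ∉ Q' → (μ C).toReal = 0 := by
    intro C hC hC'
    have : ¬ 0 < (μ C).toReal := fun h => hC' (Finset.mem_filter.2 ⟨hC, h⟩)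
    exact le_antisymm (not_lt.1 this) ENNReal.toReal_nonneg
  have hsum1 : ∑ C : Q', (μ (C : Set X)).toReal = 1 := by
    rw [Finset.sum_coe_sort Q' (fun C => (μ C).toReal), ← sum_partition hQ]
    exact Finset.sum_subset (Finset.filter_subset _ _) hzero
  have hent : ∑ C : Q', Real.negMulLog (μ (C : Set X)).toReal = partEnt μ Q := by
    rw [Finset.sum_coe_sort Q' (fun C => Real.negMulLog (μ C).toReal)]
    refine Finset.sum_subset (Finset.filter_subset _ _) fun C hC hC' => ?_
    rw [hzero C hC hC', Real.negMulLog_zero]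
  have hcov : ∀ᵐ x ∂μ, ∃ C : Q', x ∈ (C : Set X) := by
    have h1 : ∀ᵐ x ∂μ, ∃ C ∈ Q, x ∈ C := by
      have h := hQ.2.1
      rw [ae_iff]
      refine measure_mono_null ?_ h
      intro x hx
      refine ⟨mem_univ _, fun hx' => hx ?_⟩
      simpa using hx'
    have h2 : ∀ᵐ x ∂μ, ∀ C ∈ Q, C ∉ Q' → x ∉ C := by
      rw [Filter.eventually_all_finset]
      intro C hC
      by_cases h : C ∈ Q'
      · exact Filter.Eventually.of_forall fun x h' => absurd h h'
      · have h0 := hzero C hC h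
        rw [ENNReal.toReal_eq_zero_iff] at h0
        have h0' : μ C = 0 := h0.resolve_right (measure_ne_top _ _)
        filter_upwards [measure_eq_zero_iff_ae_notMem.1 h0'] with x hx _ using hx
    filter_upwards [h1, h2] with x hx1 hx2
    obtain ⟨C, hC, hxC⟩ := hx1
    by_cases h : C ∈ Q'
    · exact ⟨⟨C, h⟩, hxC⟩
    · exact absurd hxC (hx2 C hC h)
  -- parameters
  set η : ℝ := (a - partEnt μ Q) / 3 with hη
  have hη0 : 0 < η := by rw [hη]; linarith
  have hexp : Real.exp (-η) < 1 := by rw [Real.exp_lt_one_iff]; linarith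
  let p : Q' ⊕ t → ℝ := Sum.elim (fun C => Real.exp (-η) * (μ (C : Set X)).toReal)
    (fun _ => (1 - Real.exp (-η)) / t.card)
  have hp0 : ∀ i, 0 < p i := by
    rintro (C | j)
    · exact mul_pos (Real.exp_pos _) (hQ'pos C)
    · exact div_pos (by linarith) htc
  have hpsum : ∑ i, p i ≤ 1 := by
    rw [Fintype.sum_sum_type]
    simp only [p, Sum.elim_inl, Sum.elim_inr]
    rw [← Finset.mul_sum, hsum1, Finset.sum_const, Finset.card_univ, Fintype.card_coe,
      nsmul_eq_mul, mul_div_cancel₀ _ htc.ne']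
    linarith
  have hp1 : ∀ i, p i ≤ 1 := fun i =>
    (Finset.single_le_sum (f := p) (fun j _ => (hp0 j).le) (Finset.mem_univ i)).trans hpsum
  have hlog : ∀ i, 0 ≤ - Real.log (p i) := fun i => by
    have := Real.log_nonpos (hp0 i).le (hp1 i)
    linarith
  set M : ℝ := ∑ i, - Real.log (p i) with hM
  have hMi : ∀ i, - Real.log (p i) ≤ M := fun i =>
    Finset.single_le_sum (f := fun i => - Real.log (p i)) (fun j _ => hlog j) (Finset.mem_univ i)
  have hM0 : 0 ≤ M := Finset.sum_nonneg fun i _ => hlog i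
  -- compact approximations
  set δ : ℝ := η / ((M + 1) * (Q'.card + 1)) with hδ
  have hδ0 : 0 < δ := by rw [hδ]; positivity
  have hKex : ∀ C : Q', ∃ K ⊆ (C : Set X), IsCompact K ∧ μ ((C : Set X) \ K) < ENNReal.ofReal δ :=
    fun C => (hQ.1 C (hQ'Q C)).exists_isCompact_sdiff_lt (measure_ne_top _ _)
      (by simpa using hδ0)
  choose K hKC hKc hKμ using hKex
  have hUex : ∀ C : Q', ∃ U : Set X, IsOpen U ∧ K C ⊆ U ∧ U ×ˢ U ⊆ O := by
    intro C
    obtain ⟨u, v, hu, hv, hxu, hxv, huv⟩ := generalized_tube_lemma (hKc C) (hKc C) hO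
      ((Set.prod_mono (hKC C) (hKC C)).trans (hQO C (hQ'Q C)))
    exact ⟨u ∩ v, hu.inter hv, subset_inter hxu hxv, fun q hq => huv ⟨hq.1.1, hq.2.2⟩⟩
  choose U hUo hKU hUO using hUex
  have hφex : ∀ C : Q', ∃ φ : C(X, ℝ), EqOn φ 0 (U C)ᶜ ∧ EqOn φ 1 (K C) ∧
      ∀ x, φ x ∈ Icc (0 : ℝ) 1 := fun C =>
    exists_continuous_zero_one_of_isCompact' (hKc C) (hUo C).isClosed_compl
      (disjoint_compl_right_iff_subset.2 (hKU C))
  choose φ hφ0 hφ1 hφI using hφex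
  let val : Q' ⊕ t → C(X, ℝ) := Sum.elim
    (fun C => ContinuousMap.const X M - (M + Real.log (p (Sum.inl C))) • φ C)
    (fun _ => ContinuousMap.const X M)
  have huniv : (Finset.univ : Finset (Q' ⊕ t)).Nonempty := by
    obtain ⟨j, hj⟩ := htne
    exact ⟨Sum.inr ⟨j, hj⟩, Finset.mem_univ _⟩
  let G : C(X, ℝ) := Finset.univ.inf' huniv val
  have hG : ∀ x, G x = Finset.univ.inf' huniv (fun i => val i x) := fun x =>
    ContinuousMap.inf'_apply huniv val x
  have hGle : ∀ x i, G x ≤ val i x := fun x i => by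
    rw [hG]; exact Finset.inf'_le _ (Finset.mem_univ i)
  let D : Q' ⊕ t → Set X := Sum.elim U (fun j => W j)
  have hWD : ∀ x, ∃ i, x ∈ D i ∧ - Real.log (p i) ≤ M := by
    intro x
    obtain ⟨j, hj, hx⟩ := mem_iUnion₂.1 (ht (mem_univ x))
    exact ⟨Sum.inr ⟨j, hj⟩, hx, hMi _⟩
  have hmain : ∀ x, ∃ i, x ∈ D i ∧ - Real.log (p i) ≤ G x := by
    intro x
    obtain ⟨i, -, hi⟩ := Finset.exists_mem_eq_inf' huniv (fun i => val i x)
    rw [← hG] at hi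
    rcases i with C | j
    · have hi' : G x = M - (M + Real.log (p (Sum.inl C))) * φ C x := by
        rw [hi]; simp [val]
      by_cases hx : x ∈ U C
      · refine ⟨Sum.inl C, hx, ?_⟩
        rw [hi']
        have h1 := hMi (Sum.inl C)
        have h2 := (hφI C x).2
        nlinarith
      · have : φ C x = 0 := hφ0 C hx
        rw [hi', this, mul_zero, sub_zero]
        exact hWD x
    · have hi' : G x = M := by rw [hi]; simp [val]
      rw [hi']
      exact hWD x
  have hG0 : ∀ x, 0 ≤ G x := fun x => by
    obtain ⟨i, -, hi⟩ := hmain x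
    exact (hlog i).trans hi
  have hGM : ∀ x, G x ≤ M := by
    intro x
    obtain ⟨j, hj⟩ := htne
    simpa [val] using hGle x (Sum.inr ⟨j, hj⟩)
  refine ⟨Q' ⊕ t, inferInstance, D, p, G, hp0, hpsum, ?_, hmain, hG0, ?_⟩
  · rintro (C | j)
    · exact hUO C
    · exact hWO j
  · have hGK : ∀ C : Q', ∀ x ∈ K C, G x ≤ - Real.log (p (Sum.inl C)) := by
      intro C x hx
      refine (hGle x (Sum.inl C)).trans ?_
      have : φ C x = 1 := hφ1 C hx
      simp [val, this]
    have hmC : ∀ C : Q', MeasurableSet (C : Set X) := fun C => hQ.1 C (hQ'Q C)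
    have hmK : ∀ C : Q', MeasurableSet ((C : Set X) \ K C) := fun C =>
      (hmC C).diff (hKc C).measurableSet
    have hpt : ∀ᵐ x ∂μ, G x ≤ ∑ C : Q', ((C : Set X).indicator
        (fun _ => - Real.log (p (Sum.inl C))) x + ((C : Set X) \ K C).indicator (fun _ => M) x) := by
      filter_upwards [hcov] with x hx
      obtain ⟨C, hxC⟩ := hx
      refine le_trans ?_ (Finset.single_le_sum (f := fun C : Q' => ((C : Set X).indicator
        (fun _ => - Real.log (p (Sum.inl C))) x + ((C : Set X) \ K C).indicator (fun _ => M) x))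
        (fun C' _ => add_nonneg (Set.indicator_nonneg (fun _ _ => hlog _) x)
          (Set.indicator_nonneg (fun _ _ => hM0) x)) (Finset.mem_univ C))
      simp only [Set.indicator_of_mem hxC]
      by_cases hxK : x ∈ K C
      · exact (hGK C x hxK).trans (le_add_of_nonneg_right
          (Set.indicator_nonneg (fun _ _ => hM0) x))
      · rw [Set.indicator_of_mem (show x ∈ (C : Set X) \ K C from ⟨hxC, hxK⟩)]
        exact (hGM x).trans (le_add_of_nonneg_left (hlog _))
    have integ1 : ∀ C : Q', Integrable ((C : Set X).indicator
        (fun _ => - Real.log (p (Sum.inl C)))) μ := fun C =>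
      (integrable_const _).indicator (hmC C)
    have integ2 : ∀ C : Q', Integrable (((C : Set X) \ K C).indicator (fun _ => M)) μ := fun C =>
      (integrable_const _).indicator (hmK C)
    have hGint : Integrable (fun x => G x) μ :=
      (BoundedContinuousFunction.mkOfCompact G).integrable μ
    have hle := integral_mono_ae hGint
      (integrable_finsetSum _ fun C _ => (integ1 C).add (integ2 C)) hpt
    refine hle.trans_lt ?_
    rw [integral_finsetSum _ (fun C _ => (integ1 C).add (integ2 C))]
    simp only [Pi.add_apply]
    have hterm : ∀ C : Q', ∫ x, ((C : Set X).indicator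
        (fun _ => - Real.log (p (Sum.inl C))) x + ((C : Set X) \ K C).indicator (fun _ => M) x) ∂μ
        ≤ Real.negMulLog (μ (C : Set X)).toReal + η * (μ (C : Set X)).toReal + M * δ := by
      intro C
      rw [integral_add (integ1 C) (integ2 C), integral_indicator_const _ (hmC C),
        integral_indicator_const _ (hmK C)]
      simp only [Measure.real, smul_eq_mul]
      have h1 : Real.log (p (Sum.inl C)) = -η + Real.log (μ (C : Set X)).toReal := by
        simp only [p, Sum.elim_inl]
        rw [Real.log_mul (Real.exp_pos _).ne' (hQ'pos C).ne', Real.log_exp]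
      have h2 : (μ ((C : Set X) \ K C)).toReal ≤ δ :=
        ENNReal.toReal_le_of_le_ofReal hδ0.le (hKμ C).le
      rw [h1, Real.negMulLog]
      have h3 := mul_le_mul_of_nonneg_right h2 hM0
      linarith
    refine (Finset.sum_le_sum fun C _ => hterm C).trans_lt ?_
    rw [Finset.sum_add_distrib, Finset.sum_add_distrib, hent, ← Finset.mul_sum, hsum1,
      Finset.sum_const, Finset.card_univ, Fintype.card_coe, nsmul_eq_mul]
    have hfin : (Q'.card : ℝ) * (M * δ) ≤ η := by
      have : δ * ((M + 1) * (Q'.card + 1)) = η := by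
        rw [hδ]; field_simp
      have hc : (0:ℝ) ≤ Q'.card := Nat.cast_nonneg _
      have : (Q'.card : ℝ) * (M * δ) ≤ δ * ((M + 1) * (Q'.card + 1)) := by
        have h1 : (Q'.card : ℝ) * M ≤ (M + 1) * (Q'.card + 1) := by nlinarith
        have := mul_le_mul_of_nonneg_left h1 hδ0.le
        linarith
      linarith
    have : 3 * η = a - partEnt μ Q := by rw [hη]; ring
    linarith

lemma sum_blocks (g : ℕ → ℝ) (m L : ℕ) :
    ∑ t ∈ Finset.range m, ∑ i ∈ Finset.range L, g (t + m * i)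
      = ∑ j ∈ Finset.range (m * L), g j := by
  rw [Finset.sum_comm]
  induction L with
  | zero => simp
  | succ L ih =>
    rw [Finset.sum_range_succ, ih, Nat.mul_succ, Finset.sum_range_add]
    simp only [add_comm]

lemma exists_word {X κ : Type*} [Fintype κ] (f : X → X) {m : ℕ} (hm : 0 < m)
    (D : κ → Set X) (p : κ → ℝ) (G : X → ℝ) (hp0 : ∀ i, 0 < p i)
    (hcov : ∀ x, ∃ i, x ∈ D i ∧ - Real.log (p i) ≤ G x) (hG0 : ∀ x, 0 ≤ G x)
    {s' : ℝ} (hs'0 : 0 ≤ s') (x : X) (n : ℕ)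
    (hx : ∑ j ∈ Finset.range n, G (f^[j] x) ≤ n * (m * s')) :
    ∃ (t : Fin m) (i0 : κ) (w : Fin (n / m) → κ), x ∈ D i0 ∧
      (∀ i, f^[t + m * i] x ∈ D (w i)) ∧
      Real.exp (-((((n / m : ℕ) : ℝ) + 1) * (m * s'))) ≤ ∏ i, p (w i) := by
  choose c hcD hcG using hcov
  have hmR : (0:ℝ) < m := by exact_mod_cast hm
  set L := n / m with hL
  have hmL : m * L ≤ n := Nat.mul_div_le n m
  have hn : (n : ℝ) ≤ (L + 1) * m := by
    have h := (Nat.lt_mul_div_succ n hm).le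
    rw [← hL] at h
    have : (n : ℝ) ≤ m * (L + 1) := by exact_mod_cast h
    linarith
  have h1 : ∑ t ∈ Finset.range m, ∑ i ∈ Finset.range L, G (f^[t + m * i] x)
      ≤ ∑ t ∈ Finset.range m, ((L : ℝ) + 1) * (m * s') := by
    rw [sum_blocks (fun j => G (f^[j] x))]
    calc ∑ j ∈ Finset.range (m * L), G (f^[j] x) ≤ ∑ j ∈ Finset.range n, G (f^[j] x) :=
          Finset.sum_le_sum_of_subset_of_nonneg (Finset.range_mono hmL) fun j _ _ => hG0 _
      _ ≤ n * (m * s') := hx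
      _ ≤ ((L + 1) * m) * (m * s') := mul_le_mul_of_nonneg_right hn (by positivity)
      _ = _ := by rw [Finset.sum_const, Finset.card_range, nsmul_eq_mul]; ring
  obtain ⟨t, ht, htl⟩ := Finset.exists_le_of_sum_le (Finset.nonempty_range_iff.2 hm.ne') h1
  refine ⟨⟨t, Finset.mem_range.1 ht⟩, c x, fun i => c (f^[t + m * i] x), hcD x,
    fun i => hcD _, ?_⟩
  rw [← Real.le_log_iff_exp_le (Finset.prod_pos fun i _ => hp0 _),
    Real.log_prod (fun i _ => (hp0 _).ne')]
  rw [Finset.sum_range] at htl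
  have h2 : ∑ i : Fin L, - Real.log (p (c (f^[t + m * i] x)))
      ≤ ∑ i : Fin L, G (f^[t + m * i] x) := Finset.sum_le_sum fun i _ => hcG _
  rw [Finset.sum_neg_distrib] at h2
  linarith

lemma mBLim_zero {X κ : Type*} [MetricSpace X] [Fintype κ] (f : X → X) (Z : Set X)
    {ε : ℝ} {m : ℕ} (hm : 0 < m)
    (D : κ → Set X) (p : κ → ℝ) (G : X → ℝ) (hp0 : ∀ i, 0 < p i) (hpsum : ∑ i, p i ≤ 1)
    (hD : ∀ i, ∀ y ∈ D i, ∀ z ∈ D i, ∀ j < m, dist (f^[j] y) (f^[j] z) < ε)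
    (hcov : ∀ x, ∃ i, x ∈ D i ∧ - Real.log (p i) ≤ G x) (hG0 : ∀ x, 0 ≤ G x)
    {s' s : ℝ} (hs'0 : 0 ≤ s') (hs : s' < s)
    (hZ : ∀ x ∈ Z, ∃ᶠ n : ℕ in atTop, ∑ j ∈ Finset.range n, G (f^[j] x) ≤ n * (m * s')) :
    mBLim f Z s ε = 0 := by
  classical
  have hmR : (0:ℝ) < m := by exact_mod_cast hm
  set r : ℝ := Real.exp (-(m * (s - s'))) with hr
  have hr0 : 0 ≤ r := (Real.exp_pos _).le
  have hr1 : r < 1 := by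
    rw [hr, Real.exp_lt_one_iff]
    have := mul_pos hmR (sub_pos.2 hs)
    linarith
  set c : ℝ := m * Fintype.card κ * Real.exp (m * s') with hc
  have hc0 : 0 ≤ c := by rw [hc]; positivity
  have hsummable : Summable fun L : ℕ => c * r ^ L :=
    (summable_geometric_of_lt_one hr0 hr1).mul_left c
  have htail := ENNReal.tendsto_sum_nat_add (fun L : ℕ => ENNReal.ofReal (c * r ^ L))
    hsummable.tsum_ofReal_ne_top
  -- the key estimate
  have key : ∀ N : ℕ, ∀ M ≤ N, mB f Z s M ε ≤ ∑' l, ENNReal.ofReal (c * r ^ (l + N)) := by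
    intro N M hMN
    let I := Σ l : ℕ, Fin m × κ × (Fin (l + N) → κ)
    let cyl : I → Set X := fun q =>
      {x | x ∈ D q.2.2.1 ∧ ∀ i : Fin (q.1 + N), f^[q.2.1 + m * i] x ∈ D (q.2.2.2 i)}
    let good : I → Prop := fun q => (cyl q).Nonempty ∧
      Real.exp (-((((q.1 + N : ℕ) : ℝ) + 1) * (m * s'))) ≤ ∏ i, p (q.2.2.2 i)
    let g : {q : I // good q} → X × ℕ := fun q => (q.2.1.some, m * (q.1.1 + N))
    have hball : ∀ q : I, ∀ y ∈ cyl q, ∀ z ∈ cyl q, ∀ j < m * (q.1 + N),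
        dist (f^[j] y) (f^[j] z) < ε := by
      intro q y hy z hz j hj
      by_cases hjt : j < (q.2.1 : ℕ)
      · exact hD _ y hy.1 z hz.1 j (hjt.trans q.2.1.2)
      · push Not at hjt
        obtain ⟨k, rfl⟩ := Nat.exists_eq_add_of_le hjt
        have hk : k / m < q.1 + N := by
          rw [Nat.div_lt_iff_lt_mul hm, mul_comm]
          omega
        have h := hD _ _ (hy.2 ⟨k / m, hk⟩) _ (hz.2 ⟨k / m, hk⟩) (k % m) (Nat.mod_lt _ hm)
        simp only [← Function.iterate_add_apply] at h
        have he : k % m + ((q.2.1 : ℕ) + m * (k / m)) = q.2.1 + k := by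
          have := Nat.mod_add_div k m
          omega
        rwa [he] at h
    have hle : mB f Z s M ε ≤ coverSum s (Set.range g) := by
      unfold mB
      refine iInf_le_of_le (Set.range g) (iInf_le_of_le (Set.countable_range g)
        (iInf_le_of_le ?_ (iInf_le_of_le ?_ le_rfl)))
      · rintro _ ⟨q, rfl⟩
        change M ≤ m * (q.1.1 + N)
        nlinarith
      · intro x hx
        obtain ⟨n, hn, hxn⟩ := (frequently_atTop.1 (hZ x hx)) (m * N)
        obtain ⟨t, i0, w, hx0, hxw, hpw⟩ := exists_word f hm D p G hp0 hcov hG0 hs'0 x n hxn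
        have hNn : N ≤ n / m := by
          rw [Nat.le_div_iff_mul_le hm, mul_comm]; exact hn
        obtain ⟨l, hl⟩ := Nat.exists_eq_add_of_le' hNn
        generalize hL : n / m = L at *
        subst hl
        let q : I := ⟨l, t, i0, w⟩
        have hxq : x ∈ cyl q := ⟨hx0, hxw⟩
        have hgq : good q := ⟨⟨x, hxq⟩, hpw⟩
        refine mem_iUnion₂.2 ⟨g ⟨q, hgq⟩, ⟨_, rfl⟩, ?_⟩
        intro j hj
        exact hball q _ hgq.1.some_mem x hxq j hj
    refine hle.trans ?_
    let wt : X × ℕ → ℝ≥0∞ := fun q => ENNReal.ofReal (Real.exp (-s * (q.2 : ℝ)))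
    have h1 : coverSum s (Set.range g) ≤ ∑' q : {q : I // good q}, wt (g q) := by
      refine le_trans (le_of_eq ?_) (ENNReal.tsum_comp_le_tsum_of_injective
        (Set.rangeSplitting_injective g) (fun q => wt (g q)))
      unfold coverSum
      refine tsum_congr fun q => ?_
      rw [Set.apply_rangeSplitting g]
    let F : I → ℝ≥0∞ := fun q => ENNReal.ofReal
      ((∏ i, p (q.2.2.2 i)) * (Real.exp (m * s') * r ^ (q.1 + N)))
    have h2 : ∀ q : {q : I // good q}, wt (g q) ≤ F q := by
      intro q
      refine ENNReal.ofReal_le_ofReal ?_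
      refine le_trans (le_of_eq ?_) (mul_le_mul_of_nonneg_right q.2.2 (by positivity))
      rw [hr, ← Real.exp_nat_mul, ← Real.exp_add, ← Real.exp_add]
      congr 1
      simp only [g]
      push_cast
      ring
    refine h1.trans ((ENNReal.tsum_le_tsum h2).trans ?_)
    refine (ENNReal.tsum_comp_le_tsum_of_injective Subtype.val_injective F).trans ?_
    rw [ENNReal.tsum_sigma']
    refine ENNReal.tsum_le_tsum fun l => ?_
    rw [tsum_fintype]
    simp only [F]
    have hprod0 : ∀ w : Fin (l + N) → κ, 0 ≤ ∏ i, p (w i) := fun w =>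
      Finset.prod_nonneg fun i _ => (hp0 _).le
    rw [← ENNReal.ofReal_sum_of_nonneg (fun q _ => mul_nonneg (hprod0 _) (by positivity))]
    refine ENNReal.ofReal_le_ofReal ?_
    rw [← Finset.sum_mul, Fintype.sum_prod_type]
    simp only [Fintype.sum_prod_type, Finset.sum_const, Finset.card_univ, Fintype.card_fin,
      nsmul_eq_mul]
    rw [← Fintype.sum_pow]
    have hpow : (∑ i, p i) ^ (l + N) ≤ 1 :=
      pow_le_one₀ (Finset.sum_nonneg fun i _ => (hp0 i).le) hpsum
    calc (m : ℝ) * (Fintype.card κ * (∑ i, p i) ^ (l + N)) * (Real.exp (m * s') * r ^ (l + N))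
        ≤ (m : ℝ) * (Fintype.card κ * 1) * (Real.exp (m * s') * r ^ (l + N)) := by gcongr
      _ = c * r ^ (l + N) := by rw [hc]; ring
  unfold mBLim
  rw [ENNReal.iSup_eq_zero]
  intro M
  refine le_antisymm (ge_of_tendsto htail ?_) zero_le
  filter_upwards [eventually_ge_atTop M] with N hN using key N M hN

lemma integral_empProb {X : Type*} [MetricSpace X] [MeasurableSpace X] [BorelSpace X]
    (f : X → X) (x : X) {n : ℕ} (hn : 0 < n) (G : X → ℝ) :
    ∑ j ∈ Finset.range n, G (f^[j] x) = n * ∫ y, G y ∂(empProb f x n : Measure X) := by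
  have hmax : max n 1 = n := max_eq_left hn
  have hn' : (n : ℝ) ≠ 0 := by exact_mod_cast hn.ne'
  change _ = n * ∫ y, G y ∂(empMeasure f x n)
  rw [empMeasure, hmax, integral_smul_measure,
    integral_finsetSum_measure (fun j _ => integrable_dirac (by simp))]
  simp only [integral_dirac, ENNReal.toReal_inv, ENNReal.toReal_natCast, smul_eq_mul]
  rw [mul_inv_cancel_left₀ hn']

lemma hB_le_dynEnt {X : Type*} [MetricSpace X] [CompactSpace X]
    [MeasurableSpace X] [BorelSpace X]
    (f : X → X) (hf : Continuous f) (μ : ProbabilityMeasure X) (hμ : InvariantProb f μ)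
    (Z : Set X) (hZ : ∀ x ∈ Z, μ ∈ Vf f x) {ε : ℝ} (hε : 0 < ε) (P : Finset (Set X))
    (hP : IsPartition (μ : Measure X) P) (hPd : partDiamLt P ε) :
    hB f Z ε ≤ dynEnt (μ : Measure X) f P := by
  have hmp : MeasurePreserving f (μ : Measure X) (μ : Measure X) := ⟨hf.measurable, hμ⟩
  refine le_of_forall_gt_imp_ge_of_dense fun s hs => ?_
  obtain ⟨s', hs1, hs2⟩ := exists_between hs
  obtain ⟨m, hm, hent⟩ := exists_good_m hmp hP hs1
  have hmR : (0:ℝ) < m := by exact_mod_cast hm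
  have hs'0 : 0 < s' := by
    have := (partEnt_nonneg (μ : Measure X) (dynJoin f P m)).trans_lt hent
    exact (mul_pos_iff_of_pos_left hmR).1 this
  let O : Set (X × X) := ⋂ j ∈ Finset.range m, {q | dist (f^[j] q.1) (f^[j] q.2) < ε}
  have hOm : ∀ q : X × X, q ∈ O ↔ ∀ j < m, dist (f^[j] q.1) (f^[j] q.2) < ε := by
    intro q; simp [O]
  have hO : IsOpen O := by
    refine isOpen_biInter_finset fun j _ => ?_
    exact isOpen_lt (((hf.iterate j).comp continuous_fst).dist
      ((hf.iterate j).comp continuous_snd)) continuous_const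
  obtain ⟨κ, _, D, p, G, hp0, hpsum, hDO, hcov, hG0, hGint⟩ :=
    exists_coding (μ : Measure X) (isPartition_dynJoin hmp hP m) hO
      (fun x => (hOm _).2 fun j _ => by simpa using hε)
      (fun C hC q hq => (hOm _).2 fun j hj => dist_dynJoin hPd m C hC _ hq.1 _ hq.2 j hj) hent
  have hzero : mBLim f Z s ε = 0 := by
    refine mBLim_zero f Z hm D p G hp0 hpsum
      (fun i y hy z hz => (hOm (y, z)).1 (hDO i ⟨hy, hz⟩)) hcov hG0 hs'0.le hs2 ?_
    intro x hx
    have hcl : MapClusterPt μ atTop (empProb f x) := hZ x hx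
    have hcont := ProbabilityMeasure.continuous_integral_boundedContinuousFunction
      (BoundedContinuousFunction.mkOfCompact G)
    have hnhds : ∀ᶠ ν : ProbabilityMeasure X in 𝓝 μ, ∫ y, G y ∂(ν : Measure X) < m * s' :=
      hcont.continuousAt.eventually_lt continuousAt_const hGint
    refine ((hcl.frequently hnhds).and_eventually (eventually_gt_atTop 0)).mono ?_
    rintro n ⟨hn, hn0⟩
    rw [integral_empProb f x hn0]
    exact mul_le_mul_of_nonneg_left hn.le (Nat.cast_nonneg n)
  unfold hB
  by_cases hb : BddBelow {s : ℝ | mBLim f Z s ε = 0}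
  · exact csInf_le hb hzero
  · rw [Real.sInf_of_not_bddBelow hb]
    linarith

theorem stmt13 {X : Type*} [MetricSpace X] [CompactSpace X] [Nonempty X]
    [MeasurableSpace X] [BorelSpace X]
    (f : X → X) (hf : Continuous f)
    (K : Set (ProbabilityMeasure X)) (hKne : K.Nonempty) (hKcomp : IsCompact K)
    (hKconn : IsConnected K) (hKsub : K ⊆ invSet f)
    (ε : ℝ) (hε : 0 < ε) :
    hB f (GK f K) ε ≤
      sInf ((fun ν : ProbabilityMeasure X => infEnt (ν : Measure X) f ε) '' K) := by
  refine le_csInf (hKne.image _) ?_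
  rintro _ ⟨μ, hμ, rfl⟩
  obtain ⟨P₀, hP₀⟩ := exists_partition (μ : Measure X) hε
  refine le_csInf ⟨_, P₀, hP₀, rfl⟩ ?_
  rintro _ ⟨P, ⟨hP, hPd⟩, rfl⟩
  refine hB_le_dynEnt f hf μ (hKsub hμ) _ (fun x hx => ?_) hε P hP hPd
  have hx' : Vf f x = K := hx
  rw [hx']
  exact hμ

end
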